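/- Let u, v, w ∈ ℤ² be primitive vectors such that x := det(v,w), y := det(w,u), and z := det(u,v) are all positive, let α, β, γ ∈ ℚ, and suppose the set T := {a ∈ ℝ² : ⟨u,a⟩ ≤ α, ⟨v,a⟩ ≤ β, ⟨w,a⟩ ≤ γ} has nonempty interior (so T is a rational triangle). If T is pseudointegral, then the number of lattice points on the boundary of T equals (αx + βy + γz)(x + y + z)/(xyz). -/

import Mathlib

open Set Pointwise

/-- The set of lattice points of the plane. -/
def latticePts : Set (ℝ × ℝ) := {p | ∃ m n : ℤ, p = ((m : ℝ), (n : ℝ))}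

/-- The coercion of a rational point of the plane to a real point. -/
def qpt (v : ℚ × ℚ) : ℝ × ℝ := ((v.1 : ℝ), (v.2 : ℝ))

/-- The Ehrhart function of a set `P ⊆ ℝ²`:  `t ↦ #(tP ∩ ℤ²)`. -/
noncomputable def ehr (P : Set (ℝ × ℝ)) (t : ℕ) : ℕ :=
  (((t : ℝ) • P) ∩ latticePts).ncard

/-- A set `P ⊆ ℝ²` is pseudointegral (a PIP) if its Ehrhart function agrees with
a polynomial at all positive integers. -/
def IsPIP (P : Set (ℝ × ℝ)) : Prop :=
  ∃ c : Polynomial ℚ, ∀ t : ℕ, 0 < t → (ehr P t : ℚ) = c.eval (t : ℚ)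

/-- A rational triangle: the convex hull of three non-collinear rational points. -/
def IsRatTriangle (T : Set (ℝ × ℝ)) : Prop :=
  ∃ p q r : ℚ × ℚ, ¬ Collinear ℝ ({qpt p, qpt q, qpt r} : Set (ℝ × ℝ)) ∧
    T = convexHull ℝ {qpt p, qpt q, qpt r}

/-- The standard inner product on ℝ². -/
def dotR (u a : ℝ × ℝ) : ℝ := u.1 * a.1 + u.2 * a.2

/-- The coercion of an integer point of the plane to a real point. -/
def zpt (v : ℤ × ℤ) : ℝ × ℝ := ((v.1 : ℝ), (v.2 : ℝ))

/-!
Write `N c` for the number of lattice points `p` with `⟨nₑ, p⟩ ≤ cₑ` for the three normals `nₑ`,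
where `c ∈ ℤ³`. The lattice points on a line `⟨nₑ, p⟩ = cₑ` inside the triangle form an interval
whose length `g` is an explicit sum of two floors; where this expression is negative, `-g` counts
the points of the corresponding interval for the reflected triangle `-1 - c`. Hence
`L c = N c + N (-1 - c)` has first differences equal to `g` on all of `ℤ³`, without any case
distinction, and periodicity of the floors yields, with `X = xyz` and `w = (x, y, z)`,
`L (X a + c) = L (X a) + L c - L 0 + (w · a) (w · c)`.

The number of lattice points on the boundary of `T` is `ℓ 1 - ℓ (-1)`, where
`ℓ t = L (⌊tα⌋, ⌊tβ⌋, ⌊tγ⌋)` for `t ∈ ℤ`. If `T` is pseudointegral, then `ℓ` is a polynomial and the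
displayed identity forces `t ↦ ℓ t - ℓ (-t)` to be additive. For a common multiple `D = dX` of `X`
and the denominators, `ℓ D - ℓ (-D)` is found from the same identity at `c = -1`.
-/

section Additivity

lemma eq_apply_zero_of_periodic_single {ι β : Type*} [Finite ι] [DecidableEq ι]
    {F : (ι → ℤ) → β} (hF : ∀ i, Function.Periodic F (Pi.single i 1)) (c : ι → ℤ) :
    F c = F 0 := by
  have := Fintype.ofFinite ι
  suffices h : Function.Periodic F (∑ i, c i • Pi.single i 1) by
    have hc : ∑ i, c i • (Pi.single i 1 : ι → ℤ) = c := by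
      simp only [← Pi.single_smul, smul_eq_mul, mul_one, Finset.univ_sum_single]
    rw [hc] at h
    exact h.eq
  exact Finset.sum_induction _ (Function.Periodic F) (fun _ _ ↦ Function.Periodic.add_period)
    (fun _ ↦ by rw [add_zero]) fun i _ ↦ (hF i).zsmul (c i)

variable {K : Type*} [Field K] [CharZero K] {ℓ V : ℤ → K} {P : Polynomial K} {D : ℤ}

lemma eval_add_intCast_of_quasiperiod (hD : D ≠ 0) (hP : ∀ t : ℤ, 0 < t → ℓ t = P.eval (t : K))
    (hV : ∀ m t : ℤ, ℓ (D * m + t) = ℓ (D * m) + ℓ t - ℓ 0 + m * V t) (r : K) (t : ℤ) :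
    P.eval (r + t) = P.eval r + ℓ t - ℓ 0 + r * (V t / D) := by
  have hDK : (D : K) ≠ 0 := Int.cast_ne_zero.2 hD
  suffices h : P.comp (Polynomial.X + Polynomial.C (t : K)) =
      P + Polynomial.C (ℓ t - ℓ 0) + Polynomial.X * Polynomial.C (V t / D) by
    simpa only [Polynomial.eval_comp, Polynomial.eval_add, Polynomial.eval_X, Polynomial.eval_C,
      Polynomial.eval_mul, ← add_sub_assoc] using congrArg (Polynomial.eval r) h
  apply Polynomial.eq_of_infinite_eval_eq
  -- Both sides agree at the multiples `r` of `D` for which `r` and `r + t` are positive.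
  refine Set.infinite_of_injective_forall_mem
    (f := fun k : ℕ ↦ ((D * (D * (k + |t| + 1)) : ℤ) : K)) (fun k l hkl ↦ ?_) fun k ↦ ?_
  · simpa [hDK] using hkl
  · have hDD : 1 ≤ D * D := Int.add_one_le_of_lt (mul_self_pos.2 hD)
    have hlarge : k + |t| + 1 ≤ D * (D * (k + |t| + 1)) := by
      rw [← mul_assoc]
      exact le_mul_of_one_le_left (by positivity) hDD
    have hpos : 0 < D * (D * (k + |t| + 1)) := by linarith [abs_nonneg t]
    have hpos' : 0 < D * (D * (k + |t| + 1)) + t := by linarith [neg_abs_le t]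
    have key := hV (D * (k + |t| + 1)) t
    rw [hP _ hpos, hP _ hpos', Int.cast_add] at key
    simp only [Set.mem_ofPred_eq, Polynomial.eval_comp, Polynomial.eval_add, Polynomial.eval_X,
      Polynomial.eval_C, Polynomial.eval_mul, key]
    push_cast
    field_simp
    ring

lemma eval_intCast_of_quasiperiod (hD : D ≠ 0) (hP : ∀ t : ℤ, 0 < t → ℓ t = P.eval (t : K))
    (hV : ∀ m t : ℤ, ℓ (D * m + t) = ℓ (D * m) + ℓ t - ℓ 0 + m * V t) (t : ℤ) :
    P.eval (t : K) = ℓ t := by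
  have h := eval_add_intCast_of_quasiperiod hD hP hV 0
  have h1 := h 1
  have ht := h t
  rw [hP 1 one_pos] at h1
  simp only [zero_add, zero_mul] at h1 ht
  linear_combination ht - h1

lemma mul_sub_apply_neg_one_of_quasiperiod (hD : D ≠ 0)
    (hP : ∀ t : ℤ, 0 < t → ℓ t = P.eval (t : K))
    (hV : ∀ m t : ℤ, ℓ (D * m + t) = ℓ (D * m) + ℓ t - ℓ 0 + m * V t) :
    D * (ℓ 1 - ℓ (-1)) = ℓ D - ℓ (-D) := by
  have hadd (r t : ℤ) : ℓ (r + t) = ℓ r + ℓ t - ℓ 0 + r * (V t / D) := by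
    simpa only [← Int.cast_add, eval_intCast_of_quasiperiod hD hP hV] using
      eval_add_intCast_of_quasiperiod hD hP hV (r : K) t
  have hlin (t : ℤ) : V t / D = t * (V 1 / D) := by
    have h1 := hadd t 1
    have h2 := hadd 1 t
    rw [add_comm 1 t, Int.cast_one] at h2
    linear_combination h1 - h2
  let odd : ℤ →+ K := AddMonoidHom.mk' (fun t ↦ ℓ t - ℓ (-t)) fun r t ↦ by
    rw [neg_add, hadd r t, hadd (-r) (-t), hlin t, hlin (-t)]
    push_cast
    ring
  calc D * (ℓ 1 - ℓ (-1)) = D • odd 1 := (zsmul_eq_mul _ _).symm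
    _ = odd (D • 1) := (odd.map_zsmul D 1).symm
    _ = ℓ D - ℓ (-D) := by rw [smul_eq_mul, mul_one]; rfl

end Additivity

section Lines

lemma neg_sub_one_ediv_of_pos {z : ℤ} (m : ℤ) (hz : 0 < z) : (-m - 1) / z = -(m / z) - 1 := by
  rw [Int.ediv_eq_iff_of_pos hz]
  constructor <;> linarith [Int.mul_ediv_add_emod m z, Int.emod_nonneg m hz.ne',
    Int.emod_lt_of_pos m hz]

/-- The standard inner product on `ℤ²`. -/
def dotZ (u p : ℤ × ℤ) : ℤ := u.1 * p.1 + u.2 * p.2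

/-- The determinant `det(u, v)` of two vectors of `ℤ²`. -/
def planarDet (u v : ℤ × ℤ) : ℤ := u.1 * v.2 - u.2 * v.1

/-- The point with coordinate `s` on the line `{p | ⟨u, p⟩ = i}`, where `⟨u, b⟩ = 1`: the
coordinate is measured from `i • b` in units of `u` rotated by a right angle. -/
def linePoint (u b : ℤ × ℤ) (i s : ℤ) : ℤ × ℤ := (i * b.1 - s * u.2, i * b.2 + s * u.1)

variable {u b : ℤ × ℤ}

lemma dotZ_linePoint (u v b : ℤ × ℤ) (i s : ℤ) :
    dotZ v (linePoint u b i s) = i * dotZ v b + s * planarDet u v := by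
  simp only [dotZ, linePoint, planarDet]
  ring

lemma linePoint_injective (hb : dotZ u b = 1) (i : ℤ) : (linePoint u b i).Injective := by
  intro s s' h
  simp only [linePoint, Prod.mk.injEq] at h
  unfold dotZ at hb
  linear_combination b.1 * h.2 - b.2 * h.1 - (s - s') * hb

lemma range_linePoint (hb : dotZ u b = 1) (i : ℤ) :
    range (linePoint u b i) = {p | dotZ u p = i} := by
  ext p
  constructor
  · rintro ⟨s, rfl⟩
    simp only [Set.mem_ofPred_eq, dotZ_linePoint, hb, planarDet]
    ring
  · rintro rfl
    unfold dotZ at hb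
    refine ⟨planarDet b p, Prod.ext ?_ ?_⟩ <;> simp only [linePoint, planarDet, dotZ]
    · linear_combination p.1 * hb
    · linear_combination p.2 * hb

lemma ncard_line_inter_halfplanes {v w : ℤ × ℤ} (hb : dotZ u b = 1) (huv : 0 < planarDet u v)
    (hwu : 0 < planarDet w u) (i j k : ℤ) :
    {p | dotZ u p = i ∧ dotZ v p ≤ j ∧ dotZ w p ≤ k}.ncard =
      ((j - i * dotZ v b) / planarDet u v + (k - i * dotZ w b) / planarDet w u + 1).toNat := by
  have hpre : linePoint u b i ⁻¹' {p | dotZ v p ≤ j ∧ dotZ w p ≤ k} =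
      Icc (-((k - i * dotZ w b) / planarDet w u)) ((j - i * dotZ v b) / planarDet u v) := by
    have hanti : planarDet u w = -planarDet w u := by simp only [planarDet]; ring
    ext s
    rw [mem_Icc, neg_le, Int.le_ediv_iff_mul_le hwu, Int.le_ediv_iff_mul_le huv]
    simp only [mem_preimage, Set.mem_ofPred_eq, dotZ_linePoint, hanti]
    constructor <;> rintro ⟨h₁, h₂⟩ <;> constructor <;> linarith
  have himage : {p | dotZ u p = i ∧ dotZ v p ≤ j ∧ dotZ w p ≤ k} =
      linePoint u b i '' (linePoint u b i ⁻¹' {p | dotZ v p ≤ j ∧ dotZ w p ≤ k}) := by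
    rw [image_preimage_eq_inter_range, range_linePoint hb, inter_comm]
    rfl
  rw [himage, ncard_image_of_injective _ (linePoint_injective hb i), hpre, ← Finset.coe_Icc,
    ncard_coe_finset, Int.card_Icc]
  congr 1
  ring

end Lines

section Weights

@[to_additive]
lemma prod_univ_three_rotate {M : Type*} [CommMonoid M] (f : Fin 3 → M) (e : Fin 3) :
    ∏ i, f i = f e * f (e + 1) * f (e + 2) := by
  rw [← Equiv.prod_comp (Equiv.addLeft e), Fin.prod_univ_three]
  simp

lemma forall_fin_three_rotate {p : Fin 3 → Prop} (e : Fin 3) :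
    (∀ i, p i) ↔ p e ∧ p (e + 1) ∧ p (e + 2) := by
  rw [← (Equiv.addLeft e).forall_congr_right]
  simp [Fin.forall_fin_succ]

/-- The vector `(⟨nₑ, p⟩)ₑ` of values at `p` of the three edge functionals. -/
def edgeValue (n : Fin 3 → ℤ × ℤ) (p : ℤ × ℤ) : Fin 3 → ℤ := fun e ↦ dotZ (n e) p

/-- The coefficients `x`, `y`, `z` of the linear relation `x n₀ + y n₁ + z n₂ = 0` between three
vectors of the plane; indices are taken modulo three. -/
def weight (n : Fin 3 → ℤ × ℤ) (e : Fin 3) : ℤ := planarDet (n (e + 1)) (n (e + 2))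

/-- The vectors `n₀`, `n₁`, `n₂` are the primitive outer edge normals of a triangle, listed in
counterclockwise order. -/
structure IsTriangleFan (n : Fin 3 → ℤ × ℤ) : Prop where
  isCoprime (e : Fin 3) : IsCoprime (n e).1 (n e).2
  weight_pos (e : Fin 3) : 0 < weight n e

variable {n : Fin 3 → ℤ × ℤ}

lemma weight_add_one (n : Fin 3 → ℤ × ℤ) (e : Fin 3) :
    weight n (e + 1) = planarDet (n (e + 2)) (n e) := by
  fin_cases e <;> rfl

lemma weight_add_two (n : Fin 3 → ℤ × ℤ) (e : Fin 3) :
    weight n (e + 2) = planarDet (n e) (n (e + 1)) := by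
  fin_cases e <;> rfl

lemma sum_weight_mul_dotR (n : Fin 3 → ℤ × ℤ) (a : ℝ × ℝ) :
    ∑ e, (weight n e : ℝ) * dotR (zpt (n e)) a = 0 := by
  rw [sum_univ_three_rotate _ 0, weight_add_one, weight_add_two]
  simp only [weight, planarDet, dotR, zpt]
  push_cast
  ring

lemma dotR_zpt (u p : ℤ × ℤ) : dotR (zpt u) (zpt p) = dotZ u p := by
  simp [dotR, zpt, dotZ]

lemma weight_dotProduct_edgeValue (n : Fin 3 → ℤ × ℤ) (p : ℤ × ℤ) :
    weight n ⬝ᵥ edgeValue n p = 0 := by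
  have h := sum_weight_mul_dotR n (zpt p)
  simp only [dotR_zpt] at h
  exact_mod_cast h

end Weights

section Counting

/-- The number of lattice points of the triangle with edge normals `n` and integral right-hand
sides `c`. -/
noncomputable def triangleCount (n : Fin 3 → ℤ × ℤ) (c : Fin 3 → ℤ) : ℕ :=
  {p | edgeValue n p ≤ c}.ncard

/-- The sum of `triangleCount` over `c` and its reflection `-1 - c`; at most one summand is nonzero.
This extends the count to all `c` so that its first differences follow one formula. -/
noncomputable def symmCount (n : Fin 3 → ℤ × ℤ) (c : Fin 3 → ℤ) : ℤ :=
  triangleCount n c + triangleCount n (-1 - c)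

/-- The signed number of lattice points `p` of the triangle with right-hand sides `c` that satisfy
`⟨nₑ, p⟩ = cₑ`, where `⟨nₑ, b⟩ = 1`. Where it is negative there is no such point. -/
def sliceLength (n : Fin 3 → ℤ × ℤ) (e : Fin 3) (b : ℤ × ℤ) (c : Fin 3 → ℤ) : ℤ :=
  (c (e + 1) - c e * dotZ (n (e + 1)) b) / weight n (e + 2) +
    (c (e + 2) - c e * dotZ (n (e + 2)) b) / weight n (e + 1) + 1

variable {n : Fin 3 → ℤ × ℤ} {e : Fin 3} {b : ℤ × ℤ}

lemma symmCount_neg_one_sub (n : Fin 3 → ℤ × ℤ) (c : Fin 3 → ℤ) :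
    symmCount n (-1 - c) = symmCount n c := by
  rw [symmCount, symmCount, sub_sub_cancel, add_comm]

namespace IsTriangleFan

lemma exists_dotZ_eq_one (hn : IsTriangleFan n) (e : Fin 3) : ∃ b, dotZ (n e) b = 1 := by
  obtain ⟨s, t, h⟩ := hn.isCoprime e
  exact ⟨(s, t), by rw [dotZ]; linear_combination h⟩

lemma edgeValue_injective (hn : IsTriangleFan n) : (edgeValue n).Injective := by
  intro p q h
  have h0 : (n 0).1 * p.1 + (n 0).2 * p.2 = (n 0).1 * q.1 + (n 0).2 * q.2 := congrFun h 0
  have h1 : (n 1).1 * p.1 + (n 1).2 * p.2 = (n 1).1 * q.1 + (n 1).2 * q.2 := congrFun h 1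
  have hz : (n 0).1 * (n 1).2 - (n 0).2 * (n 1).1 ≠ 0 := (hn.weight_pos 2).ne'
  refine Prod.ext (mul_left_cancel₀ hz ?_) (mul_left_cancel₀ hz ?_)
  · linear_combination (n 1).2 * h0 - (n 0).2 * h1
  · linear_combination (n 0).1 * h1 - (n 1).1 * h0

lemma finite_setOf_edgeValue_le (hn : IsTriangleFan n) (c : Fin 3 → ℤ) :
    {p | edgeValue n p ≤ c}.Finite := by
  suffices h : {p | edgeValue n p ≤ c} ⊆
      edgeValue n ⁻¹' Icc (fun e ↦ c e - weight n ⬝ᵥ c) c from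
    ((finite_Icc _ _).preimage hn.edgeValue_injective.injOn).subset h
  -- The slacks `c e - ⟨nₑ, p⟩` are nonnegative and their weighted sum is `weight n ⬝ᵥ c`.
  refine fun p hp ↦ ⟨fun e ↦ ?_, hp⟩
  have hslack (f : Fin 3) : 0 ≤ (c - edgeValue n p) f := sub_nonneg.2 (hp f)
  have hsum : weight n ⬝ᵥ (c - edgeValue n p) = weight n ⬝ᵥ c := by
    rw [dotProduct_sub, weight_dotProduct_edgeValue, sub_zero]
  have hle : weight n e * (c - edgeValue n p) e ≤ weight n ⬝ᵥ (c - edgeValue n p) :=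
    Finset.single_le_sum (fun f _ ↦ mul_nonneg (hn.weight_pos f).le (hslack f))
      (Finset.mem_univ e)
  have hone := le_mul_of_one_le_left (hslack e) (Int.add_one_le_of_lt (hn.weight_pos e))
  rw [Pi.sub_apply] at hle hone
  linarith

lemma triangleCount_eq_zero (hn : IsTriangleFan n) {c : Fin 3 → ℤ} (hc : weight n ⬝ᵥ c < 0) :
    triangleCount n c = 0 := by
  have hempty : {p | edgeValue n p ≤ c} = ∅ := eq_empty_of_forall_notMem fun p hp ↦ by
    have := dotProduct_le_dotProduct_of_nonneg_left hp fun e ↦ (hn.weight_pos e).le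
    rw [weight_dotProduct_edgeValue] at this
    exact this.not_gt hc
  rw [triangleCount, hempty, ncard_empty]

lemma triangleCount_eq_add_toNat (hn : IsTriangleFan n) (hb : dotZ (n e) b = 1) (c : Fin 3 → ℤ) :
    triangleCount n c =
      triangleCount n (c - Pi.single e 1) + (sliceLength n e b c).toNat := by
  have hunion : {p | edgeValue n p ≤ c} = {p | edgeValue n p ≤ c - Pi.single e 1} ∪
      {p | dotZ (n e) p = c e ∧ dotZ (n (e + 1)) p ≤ c (e + 1) ∧
        dotZ (n (e + 2)) p ≤ c (e + 2)} := by
    ext p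
    have h1 : e + 1 ≠ e := by simp
    have h2 : e + 2 ≠ e := by simp
    simp only [mem_union, Set.mem_ofPred_eq, Pi.le_def, forall_fin_three_rotate e, edgeValue,
      Pi.sub_apply, Pi.single_eq_same, Pi.single_eq_of_ne h1, Pi.single_eq_of_ne h2]
    omega
  have hdisj : Disjoint {p | edgeValue n p ≤ c - Pi.single e 1}
      {p | dotZ (n e) p = c e ∧ dotZ (n (e + 1)) p ≤ c (e + 1) ∧
        dotZ (n (e + 2)) p ≤ c (e + 2)} := by
    refine disjoint_left.2 fun p hp hp' ↦ ?_
    have hlt : dotZ (n e) p ≤ c e - 1 := by simpa [edgeValue] using hp e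
    exact hlt.not_gt (by simp [hp'.1])
  have hfinite := hunion ▸ hn.finite_setOf_edgeValue_le c
  rw [triangleCount, hunion, ncard_union_eq hdisj (hfinite.subset subset_union_left)
    (hfinite.subset subset_union_right), ncard_line_inter_halfplanes hb]
  · rw [← weight_add_two, ← weight_add_one]
    rfl
  · exact weight_add_two n e ▸ hn.weight_pos (e + 2)
  · exact weight_add_one n e ▸ hn.weight_pos (e + 1)

lemma sliceLength_reflect (hn : IsTriangleFan n) (e : Fin 3) (b : ℤ × ℤ) (c : Fin 3 → ℤ) :
    sliceLength n e b (-1 - (c - Pi.single e 1)) = -sliceLength n e b c := by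
  have h1 : e + 1 ≠ e := by simp
  have h2 : e + 2 ≠ e := by simp
  have hneg (i j B : ℤ) : -1 - j - (-1 - (i - 1)) * B = -(j - i * B) - 1 := by ring
  simp only [sliceLength, Pi.sub_apply, Pi.neg_apply, Pi.one_apply, Pi.single_eq_same,
    Pi.single_eq_of_ne h1, Pi.single_eq_of_ne h2, sub_zero, hneg,
    neg_sub_one_ediv_of_pos _ (hn.weight_pos _)]
  ring

lemma symmCount_sub_symmCount (hn : IsTriangleFan n) (hb : dotZ (n e) b = 1) (c : Fin 3 → ℤ) :
    symmCount n c - symmCount n (c - Pi.single e 1) = sliceLength n e b c := by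
  have h := hn.triangleCount_eq_add_toNat hb c
  have h' := hn.triangleCount_eq_add_toNat hb (-1 - (c - Pi.single e 1))
  rw [hn.sliceLength_reflect, show -1 - (c - Pi.single e 1) - Pi.single e 1 = -1 - c by abel] at h'
  have hsign := Int.toNat_sub_toNat_neg (sliceLength n e b c)
  rw [symmCount, symmCount, h, h']
  push_cast
  linear_combination hsign

lemma sliceLength_prod_weight_smul_add (hn : IsTriangleFan n) (hb : dotZ (n e) b = 1)
    (a c : Fin 3 → ℤ) :
    sliceLength n e b ((∏ f, weight n f) • a + c) =
      sliceLength n e b c + weight n ⬝ᵥ a * weight n e := by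
  have hrel := weight_dotProduct_edgeValue n b
  simp only [dotProduct, sum_univ_three_rotate _ e, edgeValue, hb] at hrel ⊢
  simp only [sliceLength, Pi.add_apply, Pi.smul_apply, smul_eq_mul, prod_univ_three_rotate _ e]
  set x := weight n e
  set y := weight n (e + 1)
  set z := weight n (e + 2)
  set B := dotZ (n (e + 1)) b
  set C := dotZ (n (e + 2)) b
  have h1 : x * y * z * a (e + 1) + c (e + 1) - (x * y * z * a e + c e) * B =
      c (e + 1) - c e * B + z * (x * y * (a (e + 1) - a e * B)) := by ring
  have h2 : x * y * z * a (e + 2) + c (e + 2) - (x * y * z * a e + c e) * C =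
      c (e + 2) - c e * C + y * (x * z * (a (e + 2) - a e * C)) := by ring
  rw [h1, h2, Int.add_mul_ediv_left _ _ (hn.weight_pos _).ne',
    Int.add_mul_ediv_left _ _ (hn.weight_pos _).ne']
  linear_combination -(a e * x) * hrel

lemma symmCount_prod_weight_smul_add (hn : IsTriangleFan n) (a c : Fin 3 → ℤ) :
    symmCount n ((∏ e, weight n e) • a + c) = symmCount n ((∏ e, weight n e) • a) +
      symmCount n c - symmCount n 0 + weight n ⬝ᵥ a * weight n ⬝ᵥ c := by
  have hconst := eq_apply_zero_of_periodic_single (F := fun c ↦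
    symmCount n ((∏ e, weight n e) • a + c) - symmCount n c - weight n ⬝ᵥ a * weight n ⬝ᵥ c)
    (fun e c ↦ ?_) c
  · simp only [add_zero, dotProduct_zero, mul_zero, sub_zero] at hconst
    linear_combination hconst
  · obtain ⟨b, hb⟩ := hn.exists_dotZ_eq_one e
    have h := hn.symmCount_sub_symmCount hb (c + Pi.single e 1)
    have h' := hn.symmCount_sub_symmCount hb ((∏ e, weight n e) • a + (c + Pi.single e 1))
    rw [hn.sliceLength_prod_weight_smul_add hb, ← add_assoc] at h'
    simp only [add_sub_cancel_right] at h h'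
    simp only [dotProduct_add, dotProduct_single_one, ← add_assoc]
    linear_combination h' - h

end IsTriangleFan

end Counting

section Dilates

variable {n : Fin 3 → ℤ × ℤ}

lemma exists_common_denominator {ι : Type*} [Finite ι] (α : ι → ℚ) :
    ∃ (d : ℤ) (a : ι → ℤ), d ≠ 0 ∧ ∀ i, (a i : ℚ) = d * α i := by
  obtain ⟨d, hd⟩ := IsLocalization.exist_integer_multiples_of_finite (nonZeroDivisors ℤ) α
  choose a ha using hd
  exact ⟨d, a, nonZeroDivisors.coe_ne_zero d, fun i ↦ by simpa [Submonoid.smul_def] using ha i⟩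

lemma floor_quasiperiod_mul {ι : Type*} {d : ℤ} {a : ι → ℤ} {α : ι → ℚ}
    (ha : ∀ i, (a i : ℚ) = d * α i) (X m t : ℤ) :
    (⌊((d * X * m + t : ℤ) : ℚ) * α ·⌋) = X • (m • a) + (⌊t * α ·⌋) := by
  ext i
  rw [Pi.add_apply, ← Int.floor_intCast_add]
  congr 1
  simp only [Pi.smul_apply, smul_eq_mul]
  push_cast
  rw [ha]
  ring

namespace IsTriangleFan

lemma symmCount_sub_symmCount_neg (hn : IsTriangleFan n) (a : Fin 3 → ℤ) :
    symmCount n ((∏ e, weight n e) • a) - symmCount n ((∏ e, weight n e) • -a) =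
      weight n ⬝ᵥ a * ∑ e, weight n e := by
  have hneg : symmCount n (-1) = symmCount n 0 := by
    simpa only [sub_zero] using symmCount_neg_one_sub n 0
  rw [← symmCount_neg_one_sub n (_ • -a), smul_neg, sub_neg_eq_add, add_comm (-1 : Fin 3 → ℤ),
    hn.symmCount_prod_weight_smul_add, hneg, dotProduct_neg, dotProduct_one]
  ring

lemma symmCount_floor_sub_symmCount_floor_neg (hn : IsTriangleFan n) {α : Fin 3 → ℚ}
    {P : Polynomial ℚ} (hP : ∀ t : ℤ, 0 < t → (symmCount n (⌊t * α ·⌋) : ℚ) = P.eval (t : ℚ)) :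
    ((symmCount n (⌊α ·⌋) - symmCount n (⌊-α ·⌋) : ℤ) : ℚ) =
      (∑ e, weight n e * α e) * (∑ e, (weight n e : ℚ)) / ∏ e, (weight n e : ℚ) := by
  obtain ⟨d, a, hd, ha⟩ := exists_common_denominator α
  set X := ∏ e, weight n e with hX
  have hX0 : X ≠ 0 := Finset.prod_ne_zero_iff.2 fun e _ ↦ (hn.weight_pos e).ne'
  have hfloor := floor_quasiperiod_mul ha X
  have hmultiple (m : ℤ) : (⌊((d * X * m : ℤ) : ℚ) * α ·⌋) = X • (m • a) := by
    simpa only [add_zero, Int.cast_zero, zero_mul, Int.floor_zero, ← Pi.zero_def] using hfloor m 0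
  have hodd := mul_sub_apply_neg_one_of_quasiperiod (ℓ := fun t ↦ (symmCount n (⌊t * α ·⌋) : ℚ))
    (V := fun t ↦ ((weight n ⬝ᵥ a * weight n ⬝ᵥ (⌊t * α ·⌋) : ℤ) : ℚ)) (mul_ne_zero hd hX0) hP
    fun m t ↦ by
      rw [hfloor, hmultiple, hn.symmCount_prod_weight_smul_add, dotProduct_smul, smul_eq_mul]
      simp only [Int.cast_zero, zero_mul, Int.floor_zero, ← Pi.zero_def]
      push_cast
      ring
  have hD := hmultiple 1
  have hnegD := hmultiple (-1)
  rw [mul_one, one_smul] at hD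
  rw [mul_neg_one, neg_one_smul] at hnegD
  have hdot : ((weight n ⬝ᵥ a : ℤ) : ℚ) = d * ∑ e, weight n e * α e := by
    simp only [dotProduct, Int.cast_sum, Int.cast_mul, ha, Finset.mul_sum]
    exact Finset.sum_congr rfl fun e _ ↦ mul_left_comm _ _ _
  have hdQ : (d : ℚ) ≠ 0 := Int.cast_ne_zero.2 hd
  have hXQ : ∏ e, (weight n e : ℚ) = X := by rw [hX, Int.cast_prod]
  rw [hXQ, eq_div_iff (Int.cast_ne_zero.2 hX0)]
  apply mul_left_cancel₀ hdQ
  have hvalue := congrArg (Int.cast : ℤ → ℚ) (hn.symmCount_sub_symmCount_neg a)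
  simp only [hD, hnegD] at hodd
  simp only [Int.cast_one, one_mul, Int.cast_neg, neg_mul] at hodd
  rw [← hX] at hvalue
  push_cast [hdot] at hvalue hodd ⊢
  linear_combination hodd + hvalue

lemma symmCount_floor (hn : IsTriangleFan n) {α : Fin 3 → ℚ} (hα : 0 ≤ ∑ e, weight n e * α e) :
    symmCount n (⌊α ·⌋) = triangleCount n (⌊α ·⌋) := by
  have hneg : weight n ⬝ᵥ (-1 - (⌊α ·⌋)) < 0 := by
    suffices h : ∑ e, (weight n e : ℚ) * (-1 - ⌊α e⌋) < -∑ e, weight n e * α e by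
      have h0 : ∑ e, (weight n e : ℚ) * (-1 - ⌊α e⌋) < 0 := by linarith
      exact_mod_cast h0
    rw [← Finset.sum_neg_distrib]
    refine Finset.sum_lt_sum_of_nonempty Finset.univ_nonempty fun e _ ↦ ?_
    rw [← mul_neg]
    refine mul_lt_mul_of_pos_left ?_ (Int.cast_pos.2 (hn.weight_pos e))
    linarith [Int.lt_floor_add_one (α e)]
  rw [symmCount, hn.triangleCount_eq_zero hneg, Nat.cast_zero, add_zero]

lemma symmCount_floor_neg (hn : IsTriangleFan n) {α : Fin 3 → ℚ}
    (hα : 0 < ∑ e, weight n e * α e) :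
    symmCount n (⌊-α ·⌋) = triangleCount n (⌈α ·⌉ - 1) := by
  have hneg : weight n ⬝ᵥ (⌊-α ·⌋) < 0 := by
    suffices h : ∑ e, (weight n e : ℚ) * ⌊-α e⌋ ≤ -∑ e, weight n e * α e by
      have h0 : ∑ e, (weight n e : ℚ) * ⌊-α e⌋ < 0 := by linarith
      exact_mod_cast h0
    rw [← Finset.sum_neg_distrib]
    refine Finset.sum_le_sum fun e _ ↦ ?_
    rw [← mul_neg]
    exact mul_le_mul_of_nonneg_left (Int.floor_le _) (Int.cast_nonneg (hn.weight_pos e).le)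
  have hreflect : -1 - (⌊-α ·⌋) = (⌈α ·⌉ - 1 : Fin 3 → ℤ) := by
    ext e
    simp only [Pi.sub_apply, Pi.neg_apply, Pi.one_apply, Int.floor_neg]
    ring
  rw [symmCount, hn.triangleCount_eq_zero hneg, hreflect, Nat.cast_zero, zero_add]

end IsTriangleFan

end Dilates

section Geometry

/-- The triangle `{a | ∀ e, ⟨nₑ, a⟩ ≤ αₑ}` with rational right-hand sides `α`. -/
def rationalTriangle (n : Fin 3 → ℤ × ℤ) (α : Fin 3 → ℚ) : Set (ℝ × ℝ) :=
  {a | ∀ e, dotR (zpt (n e)) a ≤ α e}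

variable {n : Fin 3 → ℤ × ℤ} {α : Fin 3 → ℚ}

lemma zpt_injective : zpt.Injective := fun _ _ h ↦
  Prod.ext (Int.cast_injective (congrArg Prod.fst h)) (Int.cast_injective (congrArg Prod.snd h))

lemma range_zpt : range zpt = latticePts :=
  Set.ext fun _ ↦ ⟨fun ⟨p, hp⟩ ↦ ⟨p.1, p.2, hp.symm⟩, fun ⟨i, j, hp⟩ ↦ ⟨(i, j), hp.symm⟩⟩

lemma inter_latticePts (S : Set (ℝ × ℝ)) : S ∩ latticePts = zpt '' (zpt ⁻¹' S) := by
  rw [image_preimage_eq_inter_range, range_zpt]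

lemma ncard_inter_latticePts (S : Set (ℝ × ℝ)) :
    (S ∩ latticePts).ncard = (zpt ⁻¹' S).ncard := by
  rw [inter_latticePts, ncard_image_of_injective _ zpt_injective]

lemma continuous_dotR (u : ℝ × ℝ) : Continuous (dotR u) := by
  unfold dotR
  fun_prop

lemma interior_setOf_dotR_le {u : ℝ × ℝ} (hu : u ≠ 0) (r : ℝ) :
    interior {a | dotR u a ≤ r} = {a | dotR u a < r} := by
  let f : ℝ × ℝ →L[ℝ] ℝ :=
    u.1 • ContinuousLinearMap.fst ℝ ℝ ℝ + u.2 • ContinuousLinearMap.snd ℝ ℝ ℝ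
  have hf : (f : ℝ × ℝ →ₗ[ℝ] ℝ) ≠ 0 := fun h ↦ hu <| by
    have h1 := LinearMap.congr_fun h (1, 0)
    have h2 := LinearMap.congr_fun h (0, 1)
    exact Prod.ext (by simpa [f] using h1) (by simpa [f] using h2)
  have h := f.interior_preimage (LinearMap.surjective hf) (Iic r)
  rwa [interior_Iic] at h

lemma isClosed_rationalTriangle (n : Fin 3 → ℤ × ℤ) (α : Fin 3 → ℚ) :
    IsClosed (rationalTriangle n α) := by
  rw [rationalTriangle, ofPred_forall]
  exact isClosed_iInter fun e ↦ isClosed_le (continuous_dotR _) continuous_const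

lemma zpt_preimage_rationalTriangle (n : Fin 3 → ℤ × ℤ) (α : Fin 3 → ℚ) :
    zpt ⁻¹' rationalTriangle n α = {p | edgeValue n p ≤ (⌊α ·⌋)} := by
  ext p
  refine forall_congr' fun e ↦ ?_
  rw [dotR_zpt, Int.le_floor]
  exact_mod_cast Iff.rfl

lemma smul_rationalTriangle (n : Fin 3 → ℤ × ℤ) (α : Fin 3 → ℚ) {t : ℕ} (ht : 0 < t) :
    (t : ℝ) • rationalTriangle n α = rationalTriangle n (t * α ·) := by
  have ht' : (0 : ℝ) < t := Nat.cast_pos.2 ht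
  ext a
  rw [mem_smul_set_iff_inv_smul_mem₀ ht'.ne']
  refine forall_congr' fun e ↦ ?_
  have hdot : dotR (zpt (n e)) ((t : ℝ)⁻¹ • a) = (t : ℝ)⁻¹ * dotR (zpt (n e)) a := by
    simp only [dotR, Prod.smul_fst, Prod.smul_snd, smul_eq_mul]
    ring
  rw [hdot, inv_mul_le_iff₀ ht']
  push_cast
  rfl

lemma ehr_rationalTriangle (n : Fin 3 → ℤ × ℤ) (α : Fin 3 → ℚ) {t : ℕ} (ht : 0 < t) :
    ehr (rationalTriangle n α) t = triangleCount n (⌊t * α ·⌋) := by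
  rw [ehr, smul_rationalTriangle n α ht, ncard_inter_latticePts, zpt_preimage_rationalTriangle]
  rfl

namespace IsTriangleFan

lemma zpt_ne_zero (hn : IsTriangleFan n) (e : Fin 3) : zpt (n e) ≠ 0 := fun h ↦ by
  have h1 : (n e).1 = 0 := Int.cast_eq_zero.1 (congrArg Prod.fst h)
  have h2 : (n e).2 = 0 := Int.cast_eq_zero.1 (congrArg Prod.snd h)
  have hcoprime := hn.isCoprime e
  rw [h1, h2] at hcoprime
  exact not_isCoprime_zero_zero hcoprime

lemma interior_rationalTriangle (hn : IsTriangleFan n) (α : Fin 3 → ℚ) :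
    interior (rationalTriangle n α) = {a | ∀ e, dotR (zpt (n e)) a < α e} := by
  simp only [rationalTriangle, ofPred_forall, interior_iInter_of_finite,
    interior_setOf_dotR_le (hn.zpt_ne_zero _)]

lemma zpt_preimage_interior (hn : IsTriangleFan n) (α : Fin 3 → ℚ) :
    zpt ⁻¹' interior (rationalTriangle n α) = {p | edgeValue n p ≤ (⌈α ·⌉ - 1)} := by
  rw [hn.interior_rationalTriangle]
  ext p
  refine forall_congr' fun e ↦ ?_
  change _ ↔ dotZ (n e) p ≤ ⌈α e⌉ - 1
  rw [dotR_zpt, Int.le_sub_one_iff, Int.lt_ceil]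
  exact_mod_cast Iff.rfl

lemma sum_weight_mul_pos (hn : IsTriangleFan n) (hα : (interior (rationalTriangle n α)).Nonempty) :
    0 < ∑ e, weight n e * α e := by
  obtain ⟨a, ha⟩ := hα
  rw [hn.interior_rationalTriangle] at ha
  have h : ∑ e, (weight n e : ℝ) * dotR (zpt (n e)) a < ∑ e, (weight n e : ℝ) * α e :=
    Finset.sum_lt_sum_of_nonempty Finset.univ_nonempty fun e _ ↦
      mul_lt_mul_of_pos_left (ha e) (Int.cast_pos.2 (hn.weight_pos e))
  rw [sum_weight_mul_dotR] at h
  exact_mod_cast h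

lemma ncard_frontier_inter_latticePts (hn : IsTriangleFan n)
    (hα : 0 < ∑ e, weight n e * α e) :
    ((frontier (rationalTriangle n α) ∩ latticePts).ncard : ℤ) =
      symmCount n (⌊α ·⌋) - symmCount n (⌊-α ·⌋) := by
  have hfinite : (zpt ⁻¹' rationalTriangle n α).Finite := by
    rw [zpt_preimage_rationalTriangle]
    exact hn.finite_setOf_edgeValue_le _
  rw [ncard_inter_latticePts, (isClosed_rationalTriangle n α).frontier_eq, preimage_sdiff,
    cast_ncard_sdiff (preimage_mono interior_subset) hfinite, zpt_preimage_rationalTriangle,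
    hn.zpt_preimage_interior, hn.symmCount_floor hα.le, hn.symmCount_floor_neg hα]
  rfl

theorem ncard_frontier_of_isPIP (hn : IsTriangleFan n)
    (hα : (interior (rationalTriangle n α)).Nonempty) (hPIP : IsPIP (rationalTriangle n α)) :
    ((frontier (rationalTriangle n α) ∩ latticePts).ncard : ℚ) =
      (∑ e, weight n e * α e) * (∑ e, (weight n e : ℚ)) / ∏ e, (weight n e : ℚ) := by
  obtain ⟨P, hP⟩ := hPIP
  have hpos := hn.sum_weight_mul_pos hα
  rw [← hn.symmCount_floor_sub_symmCount_floor_neg (P := P), ← hn.ncard_frontier_inter_latticePts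
    hpos, Int.cast_natCast]
  intro t ht
  lift t to ℕ using ht.le
  have hpos' : 0 ≤ ∑ e, weight n e * (t * α e) := by
    simp only [mul_left_comm _ (t : ℚ), ← Finset.mul_sum]
    positivity
  have ht' : 0 < t := Int.natCast_pos.1 ht
  simp only [Int.cast_natCast, hn.symmCount_floor hpos', ← ehr_rationalTriangle n α ht', hP t ht']

end IsTriangleFan

end Geometry

/-- for a rational triangle
`T = {a : ⟨u,a⟩ ≤ α, ⟨v,a⟩ ≤ β, ⟨w,a⟩ ≤ γ}` with primitive outer edge normals
`u, v, w` and `x = det(v,w)`, `y = det(w,u)`, `z = det(u,v)` all positive, if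
`T` is pseudointegral then the number of boundary lattice points of `T` equals
`(αx + βy + γz)(x + y + z)/(xyz)`. -/
theorem stmt_16 (u v w : ℤ × ℤ)
    (hu : IsCoprime u.1 u.2) (hv : IsCoprime v.1 v.2) (hw : IsCoprime w.1 w.2)
    (x y z : ℤ)
    (hxd : x = v.1 * w.2 - v.2 * w.1)
    (hyd : y = w.1 * u.2 - w.2 * u.1)
    (hzd : z = u.1 * v.2 - u.2 * v.1)
    (hx : 0 < x) (hy : 0 < y) (hz : 0 < z)
    (α β γ : ℚ) (T : Set (ℝ × ℝ))
    (hT : T = {a : ℝ × ℝ | dotR (zpt u) a ≤ (α : ℝ) ∧ dotR (zpt v) a ≤ (β : ℝ) ∧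
      dotR (zpt w) a ≤ (γ : ℝ)})
    (hne : (interior T).Nonempty)
    (hPIP : IsPIP T) :
    ((frontier T ∩ latticePts).ncard : ℚ) =
      ((α * (x : ℚ) + β * (y : ℚ) + γ * (z : ℚ)) * ((x : ℚ) + (y : ℚ) + (z : ℚ))) /
        ((x : ℚ) * (y : ℚ) * (z : ℚ)) := by
  have hn : IsTriangleFan ![u, v, w] := by
    refine ⟨fun e ↦ ?_, fun e ↦ ?_⟩ <;> fin_cases e
    exacts [hu, hv, hw, hx.trans_eq hxd, hy.trans_eq hyd, hz.trans_eq hzd]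
  have hx' : weight ![u, v, w] 0 = x := hxd.symm
  have hy' : weight ![u, v, w] 1 = y := hyd.symm
  have hz' : weight ![u, v, w] 2 = z := hzd.symm
  have hT' : T = rationalTriangle ![u, v, w] ![α, β, γ] := by
    rw [hT]
    ext a
    exact (forall_fin_three_rotate
      (p := fun e ↦ dotR (zpt (![u, v, w] e)) a ≤ (![α, β, γ] e : ℚ)) 0).symm
  subst hT'
  rw [hn.ncard_frontier_of_isPIP hne hPIP]
  simp only [Fin.sum_univ_three, Fin.prod_univ_three, hx', hy', hz', Matrix.cons_val]
  ring
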